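/- arXiv:1110.5353 — 2 statements merged into one kernel-verified Lean document; each statement's English description precedes it below -/
import Mathlib

section
/- (Correctness of the coset-state scheme for copy-protecting point functions, Section 4.1.) Let n ≥ 1, let σ, τ_s, τ_x be permutations of {1,…,n} with τ_s ≠ e, τ_x ≠ e, τ_s² = e, and τ_x² = e. In the Hilbert space ℂ[S_n] = EuclideanSpace over ℂ indexed by the permutations of {1,…,n}, with orthonormal basis {e_π}, let ψ = (e_σ + e_{σ·τ_s})/√2, and let R be the (unitary) right-multiplication operator determined by R e_π = e_{π·τ_x}. Then the Hadamard-test acceptance probability ‖(ψ + Rψ)/2‖² equals 1 if τ_x = τ_s, and equals 1/2 if τ_x ≠ τ_s. (Equivalently: the customer's verification procedure yields outcome |0⟩ with certainty when x = s, and yields outcome |1⟩ with probability 1/2 when x ≠ s.) -/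
/-- Correctness of the coset-state scheme for copy-protecting point functions:
with `ψ = (e_σ + e_{σ·τ_s})/√2` and `R` the right-multiplication unitary
`R e_π = e_{π·τ_x}`, the Hadamard-test acceptance probability `‖(ψ + Rψ)/2‖²`
equals `1` if `τ_x = τ_s` and `1/2` otherwise. -/
theorem coset_state_verification {n : ℕ} (hn : 1 ≤ n)
    (σ τs τx : Equiv.Perm (Fin n))
    (hτs : τs ≠ 1) (hτx : τx ≠ 1)
    (hτs2 : τs ^ 2 = 1) (hτx2 : τx ^ 2 = 1) :
    ∀ (ψ Rψ : EuclideanSpace ℂ (Equiv.Perm (Fin n))),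
      ψ = ((Real.sqrt 2 : ℂ))⁻¹ •
          (EuclideanSpace.single σ 1 + EuclideanSpace.single (σ * τs) 1) →
      (∀ π : Equiv.Perm (Fin n), Rψ π = ψ (π * τx⁻¹)) →
      ‖(2 : ℂ)⁻¹ • (ψ + Rψ)‖ ^ 2 = if τx = τs then 1 else 1 / 2 := by
  intro ψ Rψ hψ hR
  have hxx : τx * τx = 1 := by rw [← pow_two]; exact hτx2
  have hss : τs * τs = 1 := by rw [← pow_two]; exact hτs2
  have hR' : Rψ = ((Real.sqrt 2 : ℂ))⁻¹ •
      (EuclideanSpace.single (σ * τx) 1 + EuclideanSpace.single (σ * τs * τx) 1) := by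
    ext π
    rw [hR, hψ]
    simp [mul_inv_eq_iff_eq_mul, Pi.single_apply]
  have key : (2 : ℂ)⁻¹ • (ψ + Rψ) = ((2 : ℂ)⁻¹ * ((Real.sqrt 2 : ℂ))⁻¹) •
      ((EuclideanSpace.single σ 1 + EuclideanSpace.single (σ * τs) 1) +
       (EuclideanSpace.single (σ * τx) 1 + EuclideanSpace.single (σ * τs * τx) 1)
        : EuclideanSpace ℂ (Equiv.Perm (Fin n))) := by
    rw [hψ, hR', ← smul_add, smul_smul]
  have hc : ‖(2 : ℂ)⁻¹ * ((Real.sqrt 2 : ℂ))⁻¹‖ ^ 2 = 1 / 8 := by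
    rw [norm_mul, norm_inv, norm_inv, Complex.norm_real, Real.norm_eq_abs, mul_pow,
      inv_pow, inv_pow, sq_abs, Real.sq_sqrt (by norm_num)]
    norm_num
  rw [key, norm_smul, mul_pow, hc, @norm_sq_eq_re_inner ℂ]
  have e1 : σ * τs ≠ σ := by simpa using hτs
  have e2 : σ * τx ≠ σ := by simpa using hτx
  have e3 : σ * τs * τx ≠ σ * τs := by simpa using hτx
  split_ifs with h
  · subst h
    rw [mul_assoc, hxx, mul_one]
    simp only [inner_add_left, inner_add_right, EuclideanSpace.inner_single_left,
      PiLp.single_apply, e1, e1.symm, if_true, if_false]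
    norm_num
  · have e4 : σ * τs * τx ≠ σ * τx := by simpa [mul_assoc] using hτs
    have e5 : σ * τs * τx ≠ σ := by
      intro h'
      rw [mul_assoc, mul_eq_left] at h'
      exact h (mul_right_cancel (hxx.trans h'.symm))
    have e6 : σ * τx ≠ σ * τs := fun h' => h (mul_left_cancel h')
    simp only [inner_add_left, inner_add_right, EuclideanSpace.inner_single_left,
      PiLp.single_apply, e1, e2, e3, e4, e5, e6, e1.symm, e2.symm, e3.symm, e4.symm, e5.symm,
      e6.symm, if_true, if_false]
    norm_num
end

section
/- (Exact moment formula for the explicit pseudorandom states of Theorem 3's construction.) Let n ≥ 1, d ≥ 1, and t ≥ 1 satisfy 2t ≤ d + 1 and t < 2^n. Let F = GF(2^n) be the finite field with 2^n elements, and fix any bijection ι : F → {0, 1, …, 2^n − 1}. For each tuple of coefficients c = (c_0, …, c_d) ∈ F^{d+1}, let p_c(X) = c_0 + c_1 X + ⋯ + c_d X^d, and define the unit vector φ_c ∈ ℂ^F by φ_c(x) = 2^{−n/2} · exp(2πi · ι(p_c(x)) / 2^n). Then for all tuples x_1, …, x_t ∈ F and y_1, …, y_t ∈ F, the average over a uniformly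 random c ∈ F^{d+1} of ∏_{i=1}^{t} φ_c(x_i) · conj(φ_c(y_i)) equals 2^{−nt} if the multiset {x_1, …, x_t} equals the multiset {y_1, …, y_t}, and equals 0 otherwise. (Equivalently, the average of the t-fold tensor power (|φ_c⟩⟨φ_c|)^{⊗t} over random c is the matrix whose ((x_1,…,x_t),(y_1,…,y_t)) entry is 2^{−nt} times the indicator that the two multisets coincide.) -/
open Finset in
/-- Lagrange-type coefficient tuple. -/
lemma exists_delta_coeffs {F : Type*} [Field F] [DecidableEq F] {d : ℕ} (S : Finset F) (hS : S.card ≤ d + 1)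
    (s : F) (hs : s ∈ S) :
    ∃ q : Fin (d + 1) → F, ∀ z ∈ S, ∑ j, q j * z ^ (j : ℕ) = if z = s then 1 else 0 := by
  refine ⟨fun j => (Lagrange.basis S id s).coeff j, fun z hz => ?_⟩
  have hdeg : (Lagrange.basis S id s).natDegree < d + 1 := by
    have h1 : (Lagrange.basis S (id : F → F) s).degree = ((S.card - 1 : ℕ) : WithBot ℕ) :=
      Lagrange.degree_basis (Function.injective_id.injOn) hs
    have h2 := Polynomial.natDegree_eq_of_degree_eq_some h1
    have : 0 < S.card := Finset.card_pos.mpr ⟨s, hs⟩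
    omega
  rw [Fin.sum_univ_eq_sum_range (fun j => (Lagrange.basis S id s).coeff j * z ^ j) (d + 1),
    ← Polynomial.eval_eq_sum_range' hdeg z]
  split_ifs with h
  · subst h
    exact Lagrange.eval_basis_self (v := (id : F → F)) (Function.injective_id.injOn) hs
  · exact Lagrange.eval_basis_of_ne (v := (id : F → F)) (fun h' => h h'.symm) hz

/-- Character-type sum over all residues vanishes. -/
lemma sum_root_pow {N a b : ℕ} (hN : N ≠ 0) (ha : a < N) (hb : b < N) (hab : a ≠ b) (ζ : ℂ)
    (hζ : IsPrimitiveRoot ζ N) :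
    ∑ k : Fin N, (ζ ^ (k : ℕ)) ^ a * ((ζ ^ (k : ℕ))⁻¹) ^ b = 0 := by
  have h0 : ζ ≠ 0 := hζ.ne_zero hN
  set r : ℂ := ζ ^ a * (ζ⁻¹) ^ b with hr
  have hr1 : r ≠ 1 := by
    intro h
    apply hab
    apply hζ.pow_inj ha hb
    rw [hr, inv_pow] at h
    exact eq_of_mul_inv_eq_one h
  have hrN : r ^ N = 1 := by
    rw [hr, mul_pow, ← pow_mul, ← pow_mul, mul_comm a, mul_comm b, pow_mul, pow_mul, inv_pow,
      hζ.pow_eq_one]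
    simp
  have h1 : ∀ k : Fin N, (ζ ^ (k : ℕ)) ^ a * ((ζ ^ (k : ℕ))⁻¹) ^ b = r ^ (k : ℕ) := by
    intro k
    rw [hr, mul_pow, ← inv_pow, ← pow_mul, ← pow_mul, ← pow_mul, ← pow_mul, mul_comm a, mul_comm b]
  rw [Finset.sum_congr rfl (fun k _ => h1 k), Fin.sum_univ_eq_sum_range (fun k => r ^ k) N,
    geom_sum_eq hr1, hrN]
  simp

/-- Averaging one coordinate kills the sum. -/
lemma sum_vanish {F : Type*} [Field F] [DecidableEq F] [Fintype F] {N d t : ℕ} (ι : F ≃ Fin N)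
    (hN : N ≠ 0) (htN : t < N) (h2t : 2 * t ≤ d + 1) (ζ : ℂ) (hζ : IsPrimitiveRoot ζ N)
    (x y : Fin t → F)
    (hxy : Multiset.map x Finset.univ.val ≠ Multiset.map y Finset.univ.val) :
    ∑ c : Fin (d + 1) → F, ∏ i, (ζ ^ (ι (∑ j, c j * x i ^ (j : ℕ)) : ℕ) *
      (ζ ^ (ι (∑ j, c j * y i ^ (j : ℕ)) : ℕ))⁻¹) = 0 := by
  obtain ⟨s, hs⟩ : ∃ s, Multiset.count s (Multiset.map x Finset.univ.val) ≠
      Multiset.count s (Multiset.map y Finset.univ.val) := by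
    by_contra! h
    exact hxy (Multiset.ext.mpr h)
  set a := (Finset.univ.filter (fun i => x i = s)).card with ha
  set b := (Finset.univ.filter (fun i => y i = s)).card with hb
  have hcount : ∀ z : Fin t → F, Multiset.count s (Multiset.map z Finset.univ.val) =
      (Finset.univ.filter (fun i => z i = s)).card := by
    intro z
    rw [Multiset.count_map, Finset.card_def, Finset.filter_val]
    simp only [eq_comm]
  rw [hcount, hcount, ← ha, ← hb] at hs
  have hat : a ≤ t := by simpa using Finset.card_filter_le (Finset.univ : Finset (Fin t)) (fun i => x i = s)
  have hbt : b ≤ t := by simpa using Finset.card_filter_le (Finset.univ : Finset (Fin t)) (fun i => y i = s)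
  set S := Finset.univ.image x ∪ Finset.univ.image y with hS
  have hScard : S.card ≤ d + 1 := by
    have h1 := Finset.card_union_le (Finset.univ.image x) (Finset.univ.image y)
    have h2 : (Finset.univ.image x).card ≤ t := by simpa using Finset.card_image_le (s := Finset.univ) (f := x)
    have h3 : (Finset.univ.image y).card ≤ t := by simpa using Finset.card_image_le (s := Finset.univ) (f := y)
    rw [← hS] at h1; omega
  have hxS : ∀ i, x i ∈ S := fun i => by simp [hS]
  have hyS : ∀ i, y i ∈ S := fun i => by simp [hS]
  have hsS : s ∈ S := by
    by_contra h
    apply hs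
    have h1 : a = 0 := by
      rw [ha, Finset.card_eq_zero, Finset.filter_eq_empty_iff]
      intro i _ hi
      exact h (hi ▸ hxS i)
    have h2 : b = 0 := by
      rw [hb, Finset.card_eq_zero, Finset.filter_eq_empty_iff]
      intro i _ hi
      exact h (hi ▸ hyS i)
    rw [h1, h2]
  obtain ⟨q, hq⟩ := exists_delta_coeffs (d := d) S hScard s hsS
  set P : (Fin (d + 1) → F) → F → F := fun c z => ∑ j, c j * z ^ (j : ℕ) with hP
  have hadd : ∀ (c : Fin (d + 1) → F) (u : F), ∀ z ∈ S,
      P (c + u • q) z = P c z + if z = s then u else 0 := by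
    intro c u z hz
    have h := hq z hz
    simp only [hP, Pi.add_apply, Pi.smul_apply, smul_eq_mul, add_mul, Finset.sum_add_distrib,
      mul_assoc, ← Finset.mul_sum, h]
    split_ifs <;> simp
  set w : F → ℂ := fun z => ζ ^ (ι z : ℕ) with hw
  set f : (Fin (d + 1) → F) → ℂ := fun c => ∏ i, (w (P c (x i)) * (w (P c (y i)))⁻¹) with hf
  change ∑ c, f c = 0
  have hsplit : ∀ (g : F → ℂ) (z : Fin t → F) (_ : ∀ i, z i ∈ S) (c : Fin (d + 1) → F) (u : F),
      ∏ i, g (P (c + u • q) (z i)) =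
        g (P c s + u) ^ (Finset.univ.filter (fun i => z i = s)).card *
          ∏ i ∈ Finset.univ.filter (fun i => ¬ z i = s), g (P c (z i)) := by
    intro g z hz c u
    rw [← Finset.prod_filter_mul_prod_filter_not Finset.univ (fun i => z i = s)]
    congr 1
    · apply Finset.prod_eq_pow_card
      intro i hi
      have hi' : z i = s := (Finset.mem_filter.mp hi).2
      rw [hadd c u _ (hz i), if_pos hi', hi']
    · apply Finset.prod_congr rfl
      intro i hi
      have hi' : ¬ z i = s := (Finset.mem_filter.mp hi).2
      rw [hadd c u _ (hz i), if_neg hi', add_zero]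
  have hinner : ∀ c, ∑ u : F, f (c + u • q) = 0 := by
    intro c
    have h1 : ∀ u, f (c + u • q) = (w (P c s + u) ^ a * ((w (P c s + u))⁻¹) ^ b) *
        ((∏ i ∈ Finset.univ.filter (fun i => ¬ x i = s), w (P c (x i))) *
          ∏ i ∈ Finset.univ.filter (fun i => ¬ y i = s), (w (P c (y i)))⁻¹) := by
      intro u
      simp only [hf]
      rw [Finset.prod_mul_distrib, hsplit w x hxS c u, hsplit (fun z => (w z)⁻¹) y hyS c u]
      ring
    rw [Finset.sum_congr rfl (fun u _ => h1 u), ← Finset.sum_mul]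
    have h2 : ∑ u : F, w (P c s + u) ^ a * ((w (P c s + u))⁻¹) ^ b = 0 := by
      rw [← sum_root_pow hN (by omega : a < N) (by omega : b < N) hs ζ hζ]
      exact Fintype.sum_equiv ((Equiv.addLeft (P c s)).trans ι) _ _ (fun u => rfl)
    rw [h2, zero_mul]
  have hshift : ∀ u : F, ∑ c, f (c + u • q) = ∑ c, f c := fun u =>
    Fintype.sum_equiv (Equiv.addRight (u • q)) _ _ (fun c => rfl)
  have htot : ∑ u : F, ∑ c, f (c + u • q) = 0 := by
    rw [Finset.sum_comm]
    exact Finset.sum_eq_zero (fun c _ => hinner c)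
  simp only [hshift, Finset.sum_const, nsmul_eq_mul] at htot
  rcases mul_eq_zero.mp htot with h | h
  · exfalso
    have : (Finset.univ : Finset F).card = 0 := by exact_mod_cast h
    simp at this
  · exact h

open scoped Classical

/-- The explicit pseudorandom state `φ_c = 2^{-n/2} ∑_{x ∈ GF(2^n)} e^{2πi·ι(p_c(x))/2^n} |x⟩`,
given as its amplitude at `x`, where `p_c` is the polynomial with coefficient tuple `c` and
`ι` is a fixed bijection from `GF(2^n)` to `{0,…,2^n-1}`. -/
noncomputable def designState {n d : ℕ} (ι : GaloisField 2 n ≃ Fin (2 ^ n))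
    (c : Fin (d + 1) → GaloisField 2 n) (x : GaloisField 2 n) : ℂ :=
  ((Real.sqrt (2 ^ n) : ℂ))⁻¹ *
    Complex.exp (2 * Real.pi * Complex.I *
      ((ι (∑ j, c j * x ^ (j : ℕ)) : Fin (2 ^ n)) : ℕ) / 2 ^ n)

/-- Exact moment formula for the explicit `t`-design states: the average over a uniformly
random coefficient tuple `c ∈ GF(2^n)^{d+1}` of `∏ᵢ φ_c(xᵢ) conj(φ_c(yᵢ))` equals `2^{-nt}`
if the multisets `{x₁,…,x_t}` and `{y₁,…,y_t}` coincide, and `0` otherwise. -/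
theorem design_state_moments {n d t : ℕ} [Fintype (GaloisField 2 n)] (hn : 1 ≤ n) (hd : 1 ≤ d) (ht : 1 ≤ t)
    (h2t : 2 * t ≤ d + 1) (ht2 : t < 2 ^ n)
    (ι : GaloisField 2 n ≃ Fin (2 ^ n))
    (x y : Fin t → GaloisField 2 n) :
    (∑ c : Fin (d + 1) → GaloisField 2 n,
        ∏ i, designState ι c (x i) * (starRingEnd ℂ) (designState ι c (y i))) /
        ((2 : ℂ) ^ n) ^ (d + 1) =
      if Multiset.map x Finset.univ.val = Multiset.map y Finset.univ.val then
        ((2 : ℂ) ^ (n * t))⁻¹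
      else 0 := by
  have hNpos : (2 ^ n : ℕ) ≠ 0 := by positivity
  set ζ : ℂ := Complex.exp (2 * Real.pi * Complex.I / ((2 ^ n : ℕ) : ℂ)) with hζdef
  have hζ : IsPrimitiveRoot ζ (2 ^ n) := Complex.isPrimitiveRoot_exp _ hNpos
  have hζn : ‖ζ‖ = 1 := hζ.norm'_eq_one hNpos
  have hds : ∀ (c : Fin (d + 1) → GaloisField 2 n) (z : GaloisField 2 n), designState ι c z =
      ((Real.sqrt (2 ^ n) : ℂ))⁻¹ * ζ ^ (ι (∑ j, c j * z ^ (j : ℕ)) : ℕ) := by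
    intro c z
    rw [designState, hζdef, ← Complex.exp_nat_mul]
    congr 2
    push_cast
    ring
  have hsq : ((Real.sqrt (2 ^ n) : ℂ))⁻¹ * ((Real.sqrt (2 ^ n) : ℂ))⁻¹ = ((2 : ℂ) ^ n)⁻¹ := by
    rw [← mul_inv, ← Complex.ofReal_mul, Real.mul_self_sqrt (by positivity)]
    push_cast
    rfl
  have hconj : ∀ k : ℕ, (starRingEnd ℂ) (ζ ^ k) = (ζ ^ k)⁻¹ := by
    intro k
    rw [Complex.inv_eq_conj]
    rw [norm_pow, hζn, one_pow]
  have hterm : ∀ c : Fin (d + 1) → GaloisField 2 n,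
      ∏ i, designState ι c (x i) * (starRingEnd ℂ) (designState ι c (y i)) =
      ((2 : ℂ) ^ (n * t))⁻¹ * ∏ i, (ζ ^ (ι (∑ j, c j * x i ^ (j : ℕ)) : ℕ) *
        (ζ ^ (ι (∑ j, c j * y i ^ (j : ℕ)) : ℕ))⁻¹) := by
    intro c
    have h1 : ∀ i, designState ι c (x i) * (starRingEnd ℂ) (designState ι c (y i)) =
        ((2 : ℂ) ^ n)⁻¹ * (ζ ^ (ι (∑ j, c j * x i ^ (j : ℕ)) : ℕ) *
        (ζ ^ (ι (∑ j, c j * y i ^ (j : ℕ)) : ℕ))⁻¹) := by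
      intro i
      rw [hds, hds, map_mul, hconj, map_inv₀, Complex.conj_ofReal, ← hsq]
      ring
    rw [Finset.prod_congr rfl (fun i _ => h1 i), Finset.prod_mul_distrib]
    simp [pow_mul]
  rw [Finset.sum_congr rfl (fun c _ => hterm c), ← Finset.mul_sum]
  split_ifs with hxy
  · have hone : ∀ c : Fin (d + 1) → GaloisField 2 n,
        ∏ i, (ζ ^ (ι (∑ j, c j * x i ^ (j : ℕ)) : ℕ) *
          (ζ ^ (ι (∑ j, c j * y i ^ (j : ℕ)) : ℕ))⁻¹) = 1 := by
      intro c
      have h := congrArg (fun m => (Multiset.map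
        (fun z : GaloisField 2 n => ζ ^ (ι (∑ j, c j * z ^ (j : ℕ)) : ℕ)) m).prod) hxy
      simp only [Multiset.map_map] at h
      have h' : ∏ i, ζ ^ (ι (∑ j, c j * x i ^ (j : ℕ)) : ℕ) =
          ∏ i, ζ ^ (ι (∑ j, c j * y i ^ (j : ℕ)) : ℕ) := h
      rw [Finset.prod_mul_distrib, h', Finset.prod_inv_distrib]
      apply mul_inv_cancel₀
      exact Finset.prod_ne_zero_iff.mpr (fun i _ => pow_ne_zero _ (hζ.ne_zero hNpos))
    have hcard : Fintype.card (GaloisField 2 n) = 2 ^ n := by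
      simpa using Fintype.card_congr ι
    rw [Finset.sum_congr rfl (fun c _ => hone c)]
    simp only [Finset.sum_const, Finset.card_univ, Fintype.card_fun, Fintype.card_fin, hcard,
      nsmul_eq_mul, mul_one]
    push_cast
    field_simp
  · rw [sum_vanish ι hNpos ht2 h2t ζ hζ x y hxy]
    simp
end
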